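/- arXiv:1711.10170 — 2 statements merged into one kernel-verified Lean document; each statement's English description precedes it below -/
import Mathlib

section
/- Let f : (0,∞) → (0,∞) with f(1) = 1 be differentiable at 1 with α := f′(1) ∈ [0,1]. Fix t > 0 and δ ∈ (0,1). For s ∈ (0,1] and ρ ∈ [−1,1] \ {0}, put f_{s,ρ}(u) := (1 − s + s·u^ρ)^{1/ρ}. Let s_k ∈ (0,1] with s_k → 0, let r_k ∈ [−1,1] \ {0} with r_k → 0, and let x_k ∈ [δ, 1/δ] satisfy f_{s_k,r_k}(1/x_k)·f(f_{s_k,r_k}(t/x_k)/f_{s_k,r_k}(1/x_k)) = 1 for every k. Then x_k → t^α as k → ∞. -/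
/-!
The equation is linearised in logarithmic coordinates. If `u_k` stays in a compact subset of
`(0, ∞)` and `s_k, r_k → 0`, then `log f_{s_k,r_k}(u_k) = s_k log u_k + o(s_k)`
(`log_powerMeanFn_isLittleO`). With `A_k, B_k` the logarithms of `f_{s_k,r_k}(1/x_k)` and
`f_{s_k,r_k}(t/x_k)`, the equation reads `A_k + g(B_k - A_k) = 0` where `g(h) = log f(e^h)`
satisfies `g(0) = 0` and `g'(0) = α`. Since `B_k - A_k = s_k log t + o(s_k)`, this becomes
`s_k (α log t - log x_k) = o(s_k)`, and division by `s_k` gives `log x_k → α log t`.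
-/

open Filter

/-- The representing function `f_{s,ρ}(u) = (1 - s + s·u^ρ)^{1/ρ}` of the weighted
power mean `𝔭_{s,ρ}`. -/
noncomputable def powerMeanFn (s ρ u : ℝ) : ℝ := (1 - s + s * u ^ ρ) ^ (1 / ρ)

open Asymptotics

lemma powerMeanFn_base_pos {s u : ℝ} (hs : s ∈ Set.Ioc (0 : ℝ) 1) (hu : 0 < u) (r : ℝ) :
    0 < 1 - s + s * u ^ r := by
  have h1 := mul_pos hs.1 (Real.rpow_pos_of_pos hu r)
  linarith [hs.2]

lemma HasDerivAt.isLittleO_comp_zero {g : ℝ → ℝ} {a : ℝ} (hg : HasDerivAt g a 0)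
    (hg0 : g 0 = 0) {h : ℕ → ℝ} (hh : Tendsto h atTop (nhds 0)) :
    (fun k => g (h k) - a * h k) =o[atTop] h := by
  have := (hasDerivAt_iff_isLittleO.1 hg).comp_tendsto hh
  refine (this.congr (fun k => ?_) (fun k => ?_))
  · simp [hg0, mul_comm]
  · simp

/-- First-order expansion of `log f_{s,r}(u)` as `s, r → 0`, along any sequence `u` whose
logarithm is bounded. -/
lemma log_powerMeanFn_isLittleO
    {s r u : ℕ → ℝ} (hs : ∀ k, s k ∈ Set.Ioc (0 : ℝ) 1) (hs0 : Tendsto s atTop (nhds 0))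
    (hr : ∀ k, r k ≠ 0) (hr0 : Tendsto r atTop (nhds 0))
    (hu : ∀ k, 0 < u k) (hb : (fun k => Real.log (u k)) =O[atTop] (fun _ => (1 : ℝ))) :
    (fun k => Real.log (powerMeanFn (s k) (r k) (u k)) - s k * Real.log (u k)) =o[atTop] s := by
  have hvO : (fun k => r k * Real.log (u k)) =O[atTop] r := by
    simpa using (isBigO_refl r atTop).mul hb
  have hv0 : Tendsto (fun k => r k * Real.log (u k)) atTop (nhds 0) := hvO.trans_tendsto hr0
  have hexp : HasDerivAt (fun v : ℝ => Real.exp v - 1) 1 0 := by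
    simpa using (Real.hasDerivAt_exp 0).sub_const 1
  have hlog : HasDerivAt (fun z : ℝ => Real.log (1 + z)) 1 0 := by
    have h := ((hasDerivAt_id (0 : ℝ)).const_add 1).log (by simp)
    simpa using h
  have hw := (hexp.isLittleO_comp_zero (by simp) hv0).trans_isBigO hvO
  have hwO : (fun k => Real.exp (r k * Real.log (u k)) - 1) =O[atTop] r := by
    refine (hw.isBigO.add hvO).congr_left fun k => ?_
    ring
  have hzO := (isBigO_refl s atTop).mul hwO
  have hz0 : Tendsto (fun k => s k * (Real.exp (r k * Real.log (u k)) - 1)) atTop (nhds 0) := by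
    simpa using hs0.mul (hwO.trans_tendsto hr0)
  have hl := (hlog.isLittleO_comp_zero (by simp) hz0).trans_isBigO hzO
  have hsum := hl.add ((isBigO_refl s atTop).mul_isLittleO hw)
  -- Multiplying the `o(s r)` expansion of `log (1 + z)` by `1 / r` yields the claim.
  have hfin := (isBigO_refl (fun k => (r k)⁻¹) atTop).mul_isLittleO hsum
  refine hfin.congr (fun k => ?_) (fun k => ?_)
  · have hpos := powerMeanFn_base_pos (hs k) (hu k) (r k)
    have hbase : 1 + s k * (Real.exp (r k * Real.log (u k)) - 1)
        = 1 - s k + s k * u k ^ r k := by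
      rw [Real.rpow_def_of_pos (hu k), mul_comm (r k)]
      ring
    rw [powerMeanFn, Real.log_rpow hpos, hbase]
    have := hr k
    field_simp
    ring
  · have := hr k
    field_simp

/-- Boundary limit of the two-parameter deformation (`r → 0` case): if `s_k → 0`,
`r_k → 0`, and `x_k ∈ [δ, 1/δ]` solve the deformed equations for `𝔭_{s_k,r_k}` at
`t`, then `x_k → t^α` where `α = f'(1)`. -/
theorem deformed_power_mean_boundary_limit_geometric
    (f : ℝ → ℝ) (hfpos : ∀ x : ℝ, 0 < x → 0 < f x) (hf1 : f 1 = 1)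
    (α : ℝ) (hderiv : HasDerivAt f α 1) (hα0 : 0 ≤ α) (hα1 : α ≤ 1)
    (t δ : ℝ) (ht : 0 < t) (hδ0 : 0 < δ) (hδ1 : δ < 1)
    (s : ℕ → ℝ) (hs : ∀ k, s k ∈ Set.Ioc (0 : ℝ) 1) (hs0 : Tendsto s atTop (nhds 0))
    (rk : ℕ → ℝ) (hrk : ∀ k, rk k ∈ Set.Icc (-1 : ℝ) 1) (hrk0 : ∀ k, rk k ≠ 0)
    (hrconv : Tendsto rk atTop (nhds 0))
    (x : ℕ → ℝ) (hx : ∀ k, x k ∈ Set.Icc δ δ⁻¹)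
    (heq : ∀ k, powerMeanFn (s k) (rk k) (1 / x k) *
      f (powerMeanFn (s k) (rk k) (t / x k) / powerMeanFn (s k) (rk k) (1 / x k)) = 1) :
    Tendsto x atTop (nhds (t ^ α)) := by
  have hxpos : ∀ k, 0 < x k := fun k => hδ0.trans_le (hx k).1
  have hlogx : (fun k => Real.log (x k)) =O[atTop] (fun _ => (1 : ℝ)) := by
    refine IsBigO.of_bound (-Real.log δ) (Eventually.of_forall fun k => ?_)
    have h1 := Real.log_le_log hδ0 (hx k).1
    have h2 := Real.log_le_log (hxpos k) (hx k).2
    rw [Real.log_inv] at h2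
    rw [Real.norm_eq_abs, norm_one, mul_one, abs_le]
    exact ⟨by linarith, h2⟩
  have hlog1 : ∀ k, Real.log (1 / x k) = -Real.log (x k) := fun k => by
    rw [one_div, Real.log_inv]
  have hlogt : ∀ k, Real.log (t / x k) = Real.log t - Real.log (x k) := fun k =>
    Real.log_div ht.ne' (hxpos k).ne'
  have hA := log_powerMeanFn_isLittleO hs hs0 hrk0 hrconv (u := fun k => 1 / x k)
    (fun k => one_div_pos.2 (hxpos k)) (by simpa only [hlog1] using hlogx.neg_left)
  have hB := log_powerMeanFn_isLittleO hs hs0 hrk0 hrconv (u := fun k => t / x k)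
    (fun k => div_pos ht (hxpos k))
    (by simpa only [hlogt] using (isBigO_const_const (Real.log t) one_ne_zero atTop).sub hlogx)
  have hpA : ∀ k, 0 < powerMeanFn (s k) (rk k) (1 / x k) := fun k =>
    Real.rpow_pos_of_pos (powerMeanFn_base_pos (hs k) (one_div_pos.2 (hxpos k)) _) _
  have hpB : ∀ k, 0 < powerMeanFn (s k) (rk k) (t / x k) := fun k =>
    Real.rpow_pos_of_pos (powerMeanFn_base_pos (hs k) (div_pos ht (hxpos k)) _) _
  simp only [hlog1] at hA
  simp only [hlogt] at hB
  set A : ℕ → ℝ := fun k => Real.log (powerMeanFn (s k) (rk k) (1 / x k)) with hAdef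
  set B : ℕ → ℝ := fun k => Real.log (powerMeanFn (s k) (rk k) (t / x k)) with hBdef
  have hh : (fun k => (B k - A k) - s k * Real.log t) =o[atTop] s := by
    refine (hB.sub hA).congr_left fun k => ?_
    simp only [hAdef, hBdef]
    ring
  have hhO : (fun k => B k - A k) =O[atTop] s := by
    have h1 : (fun k => s k * Real.log t) =O[atTop] s := by
      simpa only [mul_comm] using (isBigO_refl s atTop).const_mul_left (Real.log t)
    refine (hh.isBigO.add h1).congr_left fun k => ?_
    ring
  have hg : HasDerivAt (fun h : ℝ => Real.log (f (Real.exp h))) α 0 := by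
    have h1 : HasDerivAt f α (Real.exp 0) := by simpa using hderiv
    have h2 := (h1.comp 0 (Real.hasDerivAt_exp 0)).log (by simp [hf1])
    simpa [hf1] using h2
  have hgo := (hg.isLittleO_comp_zero (by simp [hf1]) (hhO.trans_tendsto hs0)).trans_isBigO hhO
  have hE : ∀ k, A k + Real.log (f (Real.exp (B k - A k))) = 0 := fun k => by
    have hexp : Real.exp (B k - A k) = powerMeanFn (s k) (rk k) (t / x k) /
        powerMeanFn (s k) (rk k) (1 / x k) := by
      rw [Real.exp_sub, hAdef, hBdef]
      simp only [Real.exp_log (hpA k), Real.exp_log (hpB k)]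
    rw [hexp, hAdef]
    simp only
    rw [← Real.log_mul (hpA k).ne' (hfpos _ (div_pos (hpB k) (hpA k))).ne', heq k, Real.log_one]
  have hlim : (fun k => s k * (Real.log (x k) - α * Real.log t)) =o[atTop] s := by
    refine ((hA.add hgo).add (hh.const_mul_left α)).congr_left fun k => ?_
    have := hE k
    simp only [hAdef, hBdef] at this ⊢
    linear_combination this
  have hlim0 : Tendsto (fun k => Real.log (x k) - α * Real.log t) atTop (nhds 0) := by
    refine hlim.tendsto_div_nhds_zero.congr fun k => ?_
    have := (hs k).1.ne'
    field_simp
  have hlog : Tendsto (fun k => Real.log (x k)) atTop (nhds (Real.log t * α)) := by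
    have := hlim0.add_const (α * Real.log t)
    simpa [mul_comm] using this
  rw [Real.rpow_def_of_pos ht]
  exact ((Real.continuous_exp.tendsto _).comp hlog).congr fun k => Real.exp_log (hxpos k)
end

section
/- Let n ≥ 1 and let M : Pⁿ → P be jointly monotone (A_j ≤ B_j for all j implies M(A₁,…,Aₙ) ≤ M(B₁,…,Bₙ)), positively homogeneous (M(λA₁,…,λAₙ) = λM(A₁,…,Aₙ) for every λ > 0), downward continuous (if for each j the sequence (A_{j,k})_k in P is nonincreasing and converges strongly to A_j ∈ P, then M(A_{1,k},…,A_{n,k}) converges strongly to M(A₁,…,Aₙ)), and normalized (M(I,…,I) = I). Let σ₁,…,σₙ be operator means on P, each strictly monotone in its second variable. Then for all A₁,…,Aₙ ∈ P there exists a unique X ∈ P satisfying X = M(Xσ₁A₁,…,XσₙAₙ). -/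
/-!
Write `f X = M(X σ₁ A₁, …, X σₙ Aₙ)`, a monotone self-map of the cone `P`.

*Existence.* If `d • 1 ≤ A j ≤ c • 1` for all `j`, then monotonicity, homogeneity and normalization
give `f (c • 1) ≤ c • 1` and `d • 1 ≤ f (d • 1)`. The iterates of `f` from `c • 1` therefore decrease
and stay above `d • 1`, so they converge strongly to some `X₀ ≥ d • 1` (`exists_sConv_of_antitone`,
Vigier's theorem), and downward continuity of the `σ j` and of `M` makes `X₀` a fixed point.

*Uniqueness* (`deformed_fixedPoint_le`). Let `X`, `Y` be fixed points and let `t` be the least real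
number `≥ 1` with `Y ≤ t • X`. By homogeneity `(t • X) σ A = t • (X σ (t⁻¹ • A))`. If `t > 1`, then
`t⁻¹ • A j < A j`, and strict monotonicity gives `X σ (t⁻¹ • A j) ≤ s • (X σ A j)` with one `s < 1`
for all `j`. Applying `f` to `Y ≤ t • X` gives `Y ≤ (t * s) • X`, contradicting minimality of `t`.
Hence `Y ≤ X`, and `Y = X` by symmetry.
-/


open scoped ComplexOrder

variable {H : Type*} [NormedAddCommGroup H] [InnerProductSpace ℂ H] [CompleteSpace H]

/-- Membership in `P`, the cone of positive invertible bounded linear operators on `H`. -/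
def PosInv (A : H →L[ℂ] H) : Prop := A.IsPositive ∧ IsUnit A

/-- The Loewner order: `A ≤ B` iff `B - A` is positive. -/
def Loe (A B : H →L[ℂ] H) : Prop := (B - A).IsPositive

/-- The strict order `A < B`, meaning `B - A ∈ P`. -/
def LoeLT (A B : H →L[ℂ] H) : Prop := PosInv (B - A)

/-- `A^{1/2}` via the continuous functional calculus. -/
noncomputable def opSqrt (A : H →L[ℂ] H) : H →L[ℂ] H := cfc Real.sqrt A

/-- `A^{-1/2}` via the continuous functional calculus. -/
noncomputable def opInvSqrt (A : H →L[ℂ] H) : H →L[ℂ] H :=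
  cfc (fun x : ℝ => (Real.sqrt x)⁻¹) A

/-- The Thompson metric `d_T(A,B) = ‖log (A^{-1/2} B A^{-1/2})‖`. -/
noncomputable def dT (A B : H →L[ℂ] H) : ℝ :=
  ‖cfc Real.log (opInvSqrt A * B * opInvSqrt A)‖

/-- The mean induced by a function `f`: `A σ_f B = A^{1/2} f(A^{-1/2} B A^{-1/2}) A^{1/2}`. -/
noncomputable def indMean (f : ℝ → ℝ) (A B : H →L[ℂ] H) : H →L[ℂ] H :=
  opSqrt A * cfc f (opInvSqrt A * B * opInvSqrt A) * opSqrt A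

/-- Convergence in the strong operator topology. -/
def SConv (A : ℕ → H →L[ℂ] H) (A0 : H →L[ℂ] H) : Prop :=
  ∀ x : H, Filter.Tendsto (fun k => A k x) Filter.atTop (nhds (A0 x))

/-- A Kubo–Ando operator mean on `P`: a binary operation satisfying (I) joint
monotonicity, (II) the transformer equality (together with positive homogeneity),
(III) downward continuity along nonincreasing strongly convergent sequences, and
(IV) normalization. -/
structure IsOperatorMean (m : (H →L[ℂ] H) → (H →L[ℂ] H) → (H →L[ℂ] H)) : Prop where
  maps_P : ∀ A B, PosInv A → PosInv B → PosInv (m A B)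
  mono : ∀ A A' B B', PosInv A → PosInv A' → PosInv B → PosInv B' →
    Loe A A' → Loe B B' → Loe (m A B) (m A' B')
  transformer : ∀ A B C, PosInv A → PosInv B → PosInv C →
    C * m A B * C = m (C * A * C) (C * B * C)
  homog : ∀ A B, PosInv A → PosInv B → ∀ r : ℝ, 0 < r → m (r • A) (r • B) = r • m A B
  downCont : ∀ (A B : ℕ → H →L[ℂ] H) (A0 B0 : H →L[ℂ] H),
    (∀ k, PosInv (A k)) → (∀ k, PosInv (B k)) → PosInv A0 → PosInv B0 →
    (∀ k, Loe (A (k + 1)) (A k)) → (∀ k, Loe (B (k + 1)) (B k)) →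
    SConv A A0 → SConv B B0 →
    (∀ k, Loe (m (A (k + 1)) (B (k + 1))) (m (A k) (B k))) ∧
      SConv (fun k => m (A k) (B k)) (m A0 B0)
  norm_one : m 1 1 = 1

/-- `σ` is strictly monotone in its second variable: `X ∈ P` and `A < B` imply `XσA < XσB`. -/
def StrictSecond (m : (H →L[ℂ] H) → (H →L[ℂ] H) → (H →L[ℂ] H)) : Prop :=
  ∀ X A B, PosInv X → PosInv A → PosInv B → LoeLT A B → LoeLT (m X A) (m X B)

open Filter Topology

set_option linter.unusedSectionVars false

theorem posInv_iff (A : H →L[ℂ] H) : PosInv A ↔ IsStrictlyPositive A :=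
  and_congr_left fun _ => (ContinuousLinearMap.nonneg_iff_isPositive A).symm

theorem loe_refl (A : H →L[ℂ] H) : Loe A A := le_refl A

theorem PosInv.of_le {A B : H →L[ℂ] H} (hA : PosInv A) (h : A ≤ B) : PosInv B :=
  (posInv_iff B).2 (((posInv_iff A).1 hA).of_le h)

theorem posInv_one : PosInv (1 : H →L[ℂ] H) := ⟨ContinuousLinearMap.isPositive_one, isUnit_one⟩

theorem PosInv.nonneg {A : H →L[ℂ] H} (hA : PosInv A) : 0 ≤ A := ((posInv_iff A).1 hA).nonneg

theorem PosInv.smul {A : H →L[ℂ] H} (hA : PosInv A) {r : ℝ} (hr : 0 < r) : PosInv (r • A) := by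
  refine ⟨(ContinuousLinearMap.nonneg_iff_isPositive _).1 (smul_nonneg hr.le hA.nonneg), ?_⟩
  exact hA.2.smul (Units.mk0 r hr.ne')

theorem le_norm_smul_one {A : H →L[ℂ] H} (hA : 0 ≤ A) : A ≤ ‖A‖ • (1 : H →L[ℂ] H) := by
  rw [← Algebra.algebraMap_eq_smul_one]
  exact IsSelfAdjoint.le_algebraMap_norm_self (.of_nonneg hA)

theorem PosInv.exists_smul_one_le {A : H →L[ℂ] H} (hA : PosInv A) :
    ∃ r : ℝ, 0 < r ∧ r • (1 : H →L[ℂ] H) ≤ A := by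
  rcases subsingleton_or_nontrivial (H →L[ℂ] H) with h | h
  · exact ⟨1, one_pos, (Subsingleton.elim _ _).le⟩
  have hA' := (posInv_iff A).1 hA
  obtain ⟨r, hr, h⟩ :=
    (CFC.exists_pos_algebraMap_le_iff (a := A) hA'.isSelfAdjoint).2 fun x hx ↦ hA'.spectrum_pos hx
  exact ⟨r, hr, by rwa [← Algebra.algebraMap_eq_smul_one]⟩

/-- A strict inequality `B < C` leaves a multiplicative gap: since `C - B ≥ r • 1` with `r > 0` and
`C` is bounded, a small multiple of `C` still lies below `C - B`. -/
theorem exists_le_smul_of_loeLT {B C : H →L[ℂ] H} (hC : PosInv C) (h : LoeLT B C) :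
    ∃ s : ℝ, 0 < s ∧ s < 1 ∧ B ≤ s • C := by
  obtain ⟨r, hr, hrle⟩ := PosInv.exists_smul_one_le h
  have hn := norm_nonneg C
  set e : ℝ := min (1 / 2) (r / (‖C‖ + 1)) with he
  have he0 : 0 < e := by positivity
  have he1 : e ≤ 1 / 2 := min_le_left _ _
  have he2 : e * ‖C‖ ≤ r := by
    have h2 : e ≤ r / (‖C‖ + 1) := min_le_right _ _
    rw [le_div_iff₀ (by positivity)] at h2
    nlinarith
  refine ⟨1 - e, by linarith, by linarith, ?_⟩
  have h3 : e • C ≤ C - B := calc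
    e • C ≤ e • (‖C‖ • (1 : H →L[ℂ] H)) :=
      smul_le_smul_of_nonneg_left (le_norm_smul_one hC.nonneg) he0.le
    _ = (e * ‖C‖) • (1 : H →L[ℂ] H) := smul_smul _ _ _
    _ ≤ r • (1 : H →L[ℂ] H) := smul_le_smul_of_nonneg_right he2 posInv_one.nonneg
    _ ≤ C - B := hrle
  rw [sub_smul, one_smul]
  exact le_sub_comm.1 h3

/-- A form of the Cauchy–Schwarz inequality for a positive operator `D`, obtained from `D = S * S`
with `S` the positive square root. It turns convergence of quadratic forms into strong convergence. -/
theorem norm_apply_sq_le {D : H →L[ℂ] H} (hD : 0 ≤ D) (x : H) :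
    ‖D x‖ ^ 2 ≤ ‖D‖ * (inner ℂ (D x) x).re := by
  set S := CFC.sqrt D with hS
  have hSS : S * S = D := CFC.sqrt_mul_sqrt_self D
  have hSsa : IsSelfAdjoint S := .of_nonneg (CFC.sqrt_nonneg D)
  have hn : ‖S‖ * ‖S‖ = ‖D‖ := by
    rw [← CStarRing.norm_star_mul_self, hSsa.star_eq, hSS]
  have hin : (inner ℂ (D x) x).re = ‖S x‖ ^ 2 := by
    rw [← hSS, mul_apply_eq_comp]
    have := hSsa.isSymmetric (S x) x
    simp only [ContinuousLinearMap.coe_coe] at this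
    rw [this]
    exact inner_self_eq_norm_sq (𝕜 := ℂ) (S x)
  have h1 : ‖D x‖ ≤ ‖S‖ * ‖S x‖ := by
    rw [← hSS]; exact S.le_opNorm (S x)
  calc ‖D x‖ ^ 2 ≤ (‖S‖ * ‖S x‖) ^ 2 := by gcongr
    _ = _ := by rw [hin, ← hn]; ring

theorem re_inner_le_of_le {A B : H →L[ℂ] H} (h : A ≤ B) (x : H) :
    (inner ℂ (A x) x).re ≤ (inner ℂ (B x) x).re := by
  have := ContinuousLinearMap.IsPositive.re_inner_nonneg_left h x
  simpa [inner_sub_left] using this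

theorem le_of_re_inner_le {A B : H →L[ℂ] H} (hA : 0 ≤ A) (hB : 0 ≤ B)
    (h : ∀ x, (inner ℂ (A x) x).re ≤ (inner ℂ (B x) x).re) : A ≤ B := by
  refine (ContinuousLinearMap.isPositive_def' (𝕜 := ℂ)).2
    ⟨(IsSelfAdjoint.of_nonneg hB).sub (.of_nonneg hA), fun x => ?_⟩
  simpa [ContinuousLinearMap.reApplyInnerSelf, inner_sub_left] using h x

/-- Vigier's theorem: a decreasing sequence of positive operators converges strongly. The quadratic
forms converge, and `norm_apply_sq_le` applied to differences makes `X k x` a Cauchy sequence. -/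
theorem exists_sConv_of_antitone {X : ℕ → H →L[ℂ] H} (hX : Antitone X) (h0 : ∀ k, 0 ≤ X k) :
    ∃ X0 : H →L[ℂ] H, SConv X X0 := by
  have hlim : ∀ x : H, ∃ y, Tendsto (fun k => X k x) atTop (𝓝 y) := by
    intro x
    set q : ℕ → ℝ := fun k => (inner ℂ (X k x) x).re with hq
    have hqa : Antitone q := fun k l hkl => re_inner_le_of_le (hX hkl) x
    have hq0 : BddBelow (Set.range q) := by
      refine ⟨0, ?_⟩
      rintro _ ⟨k, rfl⟩
      simpa using re_inner_le_of_le (h0 k) x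
    have hqc : CauchySeq q := (tendsto_atTop_ciInf hqa hq0).cauchySeq
    refine cauchySeq_tendsto_of_complete (Metric.cauchySeq_iff'.2 fun ε hε => ?_)
    obtain ⟨N, hN⟩ := Metric.cauchySeq_iff'.1 hqc (ε ^ 2 / (‖X 0‖ + 1)) (by positivity)
    refine ⟨N, fun k hk => ?_⟩
    have hD : 0 ≤ X N - X k := sub_nonneg.2 (hX hk)
    have hnorm : ‖X N - X k‖ ≤ ‖X 0‖ :=
      CStarAlgebra.norm_le_norm_of_nonneg_of_le hD
        ((sub_le_self _ (h0 k)).trans (hX (Nat.zero_le N)))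
    have h1 := norm_apply_sq_le hD x
    have h2 : (inner ℂ ((X N - X k) x) x).re = q N - q k := by
      simp [hq]
    have h3 : q k ≤ q N := hqa hk
    have h4 := hN k hk
    rw [Real.dist_eq, abs_sub_comm, abs_of_nonneg (by linarith), lt_div_iff₀ (by positivity)] at h4
    rw [h2] at h1
    rw [dist_comm, dist_eq_norm]
    refine lt_of_pow_lt_pow_left₀ 2 hε.le ?_
    have h5 : ‖X N x - X k x‖ ^ 2 ≤ ‖X N - X k‖ * (q N - q k) := h1
    nlinarith [norm_nonneg (X 0)]
  choose f hf using hlim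
  exact ⟨continuousLinearMapOfTendsto X (tendsto_pi_nhds.2 hf), hf⟩

theorem le_of_sConv {X : ℕ → H →L[ℂ] H} {X0 L : H →L[ℂ] H} (hX : SConv X X0) (h : ∀ k, L ≤ X k) :
    L ≤ X0 := by
  refine (ContinuousLinearMap.isPositive_iff_complex _).2 fun x => ?_
  have ht : Tendsto (fun k => inner ℂ ((X k - L) x) x) atTop (𝓝 (inner ℂ ((X0 - L) x) x)) :=
    ((hX x).sub_const (L x)).inner tendsto_const_nhds
  have hk k := (ContinuousLinearMap.isPositive_iff_complex _).1 (h k) x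
  have hre := (Complex.continuous_re.tendsto _).comp ht
  refine ⟨?_, ge_of_tendsto' hre fun k => (hk k).2⟩
  refine tendsto_nhds_unique ?_ ht
  refine ((Complex.continuous_ofReal.tendsto _).comp hre).congr fun k => (hk k).1

theorem sConv_unique {X : ℕ → H →L[ℂ] H} {Y Z : H →L[ℂ] H} (hY : SConv X Y) (hZ : SConv X Z) :
    Y = Z :=
  ContinuousLinearMap.ext fun x => tendsto_nhds_unique (hY x) (hZ x)

/-- The uniqueness half: `X` and `Y` play symmetric roles here, so any two fixed points of
`X ↦ M(X σ₁ A₁, …, X σₙ Aₙ)` coincide. -/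
theorem deformed_fixedPoint_le
    {n : ℕ} (hn : 1 ≤ n)
    {M : (Fin n → H →L[ℂ] H) → H →L[ℂ] H}
    (hMmono : ∀ A B : Fin n → H →L[ℂ] H, (∀ j, PosInv (A j)) → (∀ j, PosInv (B j)) →
      (∀ j, Loe (A j) (B j)) → Loe (M A) (M B))
    (hMhomog : ∀ A : Fin n → H →L[ℂ] H, (∀ j, PosInv (A j)) →
      ∀ l : ℝ, 0 < l → M (fun j => l • A j) = l • M A)
    {σ : Fin n → (H →L[ℂ] H) → (H →L[ℂ] H) → (H →L[ℂ] H)}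
    (hσ : ∀ j, IsOperatorMean (σ j)) (hσstrict : ∀ j, StrictSecond (σ j))
    {A : Fin n → H →L[ℂ] H} (hA : ∀ j, PosInv (A j)) {X Y : H →L[ℂ] H}
    (hX : PosInv X) (hY : PosInv Y)
    (hXfix : X = M (fun j => σ j X (A j))) (hYfix : Y = M (fun j => σ j Y (A j))) :
    Y ≤ X := by
  have : Nonempty (Fin n) := ⟨⟨0, hn⟩⟩
  have improve : ∀ t : ℝ, 1 < t → Y ≤ t • X → ∃ s : ℝ, s < 1 ∧ Y ≤ (t * s) • X := by
    intro t ht hYX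
    have ht0 : 0 < t := by linarith
    have hAt j : PosInv (t⁻¹ • A j) := (hA j).smul (inv_pos.2 ht0)
    have hlt j : LoeLT (t⁻¹ • A j) (A j) := by
      have : A j - t⁻¹ • A j = (1 - t⁻¹) • A j := by rw [sub_smul, one_smul]
      rw [LoeLT, this]
      exact (hA j).smul (sub_pos.2 (inv_lt_one_of_one_lt₀ ht))
    have hgap j := exists_le_smul_of_loeLT ((hσ j).maps_P _ _ hX (hA j))
      (hσstrict j X _ _ hX (hAt j) (hA j) (hlt j))
    choose s hs0 hs1 hs using hgap
    obtain ⟨j0, hj0⟩ := Finite.exists_max s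
    refine ⟨s j0, hs1 j0, ?_⟩
    have hXA j : PosInv (σ j X (A j)) := (hσ j).maps_P _ _ hX (hA j)
    have hts : 0 < t * s j0 := mul_pos ht0 (hs0 j0)
    rw [hYfix]
    conv_rhs => rw [hXfix, ← hMhomog _ hXA _ hts]
    refine hMmono _ _ (fun j => (hσ j).maps_P _ _ hY (hA j)) (fun j => (hXA j).smul hts)
      fun j => ?_
    calc σ j Y (A j) ≤ σ j (t • X) (A j) :=
          (hσ j).mono _ _ _ _ hY (hX.smul ht0) (hA j) (hA j) hYX (loe_refl _)
      _ = σ j (t • X) (t • t⁻¹ • A j) := by rw [smul_inv_smul₀ ht0.ne']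
      _ = t • σ j X (t⁻¹ • A j) := (hσ j).homog _ _ hX (hAt j) t ht0
      _ ≤ t • (s j0 • σ j X (A j)) := by
          refine smul_le_smul_of_nonneg_left ((hs j).trans ?_) ht0.le
          exact smul_le_smul_of_nonneg_right (hj0 j) (hXA j).nonneg
      _ = (t * s j0) • σ j X (A j) := smul_smul _ _ _
  let S : Set ℝ := {t | 1 ≤ t ∧ Y ≤ t • X}
  have hSne : S.Nonempty := by
    obtain ⟨r, hr, hrX⟩ := hX.exists_smul_one_le
    refine ⟨max 1 (‖Y‖ / r), le_max_left _ _, ?_⟩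
    calc Y ≤ ‖Y‖ • (1 : H →L[ℂ] H) := le_norm_smul_one hY.nonneg
      _ = (‖Y‖ / r) • (r • (1 : H →L[ℂ] H)) := by rw [smul_smul, div_mul_cancel₀ _ hr.ne']
      _ ≤ (‖Y‖ / r) • X := smul_le_smul_of_nonneg_left hrX (by positivity)
      _ ≤ _ := smul_le_smul_of_nonneg_right (le_max_right _ _) hX.nonneg
  have hSbdd : BddBelow S := ⟨1, fun t ht => ht.1⟩
  have hSclosed : IsClosed S := by
    have : S = Set.Ici 1 ∩ ⋂ x : H,
        {t : ℝ | (inner ℂ (Y x) x).re ≤ t * (inner ℂ (X x) x).re} := by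
      have hsm (t : ℝ) (x : H) :
          (inner ℂ ((t • X) x) x).re = t * (inner ℂ (X x) x).re := by
        simp [inner_smul_left_eq_smul]
      ext t
      simp only [S, Set.mem_ofPred_eq, Set.mem_inter_iff, Set.mem_Ici, Set.mem_iInter]
      refine and_congr_right fun ht => ⟨fun h x => ?_, fun h => ?_⟩
      · rw [← hsm]; exact re_inner_le_of_le h x
      · refine le_of_re_inner_le hY.nonneg (hX.smul (by linarith)).nonneg fun x => ?_
        rw [hsm]; exact h x
    rw [this]
    exact isClosed_Ici.inter (isClosed_iInter fun x =>
      isClosed_le continuous_const (continuous_id.mul continuous_const))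
  have hmem : sInf S ∈ S := hSclosed.csInf_mem hSne hSbdd
  set t := sInf S with htdef
  rcases hmem.1.eq_or_lt with h1 | h1
  · have := hmem.2
    rwa [← h1, one_smul] at this
  · exfalso
    obtain ⟨s, hs1, hs⟩ := improve t h1 hmem.2
    have hmax : max 1 (t * s) ∈ S :=
      ⟨le_max_left _ _, hs.trans (smul_le_smul_of_nonneg_right (le_max_right _ _) hX.nonneg)⟩
    have : t ≤ max 1 (t * s) := csInf_le hSbdd hmax
    rcases le_max_iff.1 this with h | h
    · linarith
    · nlinarith

/-- Deformation of a multivariate mean: if `M : Pⁿ → P` is jointly monotone,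
positively homogeneous, downward continuous and normalized, and `σ₁, …, σₙ` are
operator means each strictly monotone in its second variable, then for all
`A₁, …, Aₙ ∈ P` the equation `X = M(Xσ₁A₁, …, XσₙAₙ)` has a unique solution in `P`. -/
theorem multivariate_deformed_mean_existsUnique
    (n : ℕ) (hn : 1 ≤ n)
    (M : (Fin n → H →L[ℂ] H) → H →L[ℂ] H)
    (hMmaps : ∀ A : Fin n → H →L[ℂ] H, (∀ j, PosInv (A j)) → PosInv (M A))
    (hMmono : ∀ A B : Fin n → H →L[ℂ] H, (∀ j, PosInv (A j)) → (∀ j, PosInv (B j)) →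
      (∀ j, Loe (A j) (B j)) → Loe (M A) (M B))
    (hMhomog : ∀ A : Fin n → H →L[ℂ] H, (∀ j, PosInv (A j)) →
      ∀ l : ℝ, 0 < l → M (fun j => l • A j) = l • M A)
    (hMcont : ∀ (A : ℕ → Fin n → H →L[ℂ] H) (A0 : Fin n → H →L[ℂ] H),
      (∀ k j, PosInv (A k j)) → (∀ j, PosInv (A0 j)) →
      (∀ k j, Loe (A (k + 1) j) (A k j)) →
      (∀ j, SConv (fun k => A k j) (A0 j)) →
      SConv (fun k => M (A k)) (M A0))
    (hMnorm : M (fun _ => 1) = 1)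
    (σ : Fin n → (H →L[ℂ] H) → (H →L[ℂ] H) → (H →L[ℂ] H))
    (hσ : ∀ j, IsOperatorMean (σ j)) (hσstrict : ∀ j, StrictSecond (σ j))
    (A : Fin n → H →L[ℂ] H) (hA : ∀ j, PosInv (A j)) :
    ∃! X : H →L[ℂ] H, PosInv X ∧ X = M (fun j => σ j X (A j)) := by
  have hσP {X} (hX : PosInv X) j : PosInv (σ j X (A j)) := (hσ j).maps_P _ _ hX (hA j)
  set f : (H →L[ℂ] H) → (H →L[ℂ] H) := fun X => M fun j => σ j X (A j) with hf
  have hfP {X} (hX : PosInv X) : PosInv (f X) := hMmaps _ (hσP hX)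
  have hfmono {X Y} (hX : PosInv X) (hY : PosInv Y) (h : X ≤ Y) : f X ≤ f Y :=
    hMmono _ _ (hσP hX) (hσP hY) fun j => (hσ j).mono _ _ _ _ hX hY (hA j) (hA j) h (loe_refl _)
  have hM1 {c : ℝ} (hc : 0 < c) : M (fun _ => c • (1 : H →L[ℂ] H)) = c • 1 := by
    rw [hMhomog _ (fun _ => posInv_one) c hc, hMnorm]
  have hσ1 {c : ℝ} (hc : 0 < c) j : σ j (c • 1) (c • 1) = c • 1 := by
    rw [(hσ j).homog _ _ posInv_one posInv_one c hc, (hσ j).norm_one]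
  have hcP {c : ℝ} (hc : 0 < c) : PosInv (c • (1 : H →L[ℂ] H)) := posInv_one.smul hc
  have : Nonempty (Fin n) := ⟨⟨0, hn⟩⟩
  obtain ⟨d, hd, hdA⟩ : ∃ d : ℝ, 0 < d ∧ ∀ j, d • (1 : H →L[ℂ] H) ≤ A j := by
    choose r hr hrA using fun j => (hA j).exists_smul_one_le
    obtain ⟨j0, hj0⟩ := Finite.exists_min r
    exact ⟨r j0, hr j0, fun j =>
      (smul_le_smul_of_nonneg_right (hj0 j) posInv_one.nonneg).trans (hrA j)⟩
  obtain ⟨c, hdc, hcA⟩ : ∃ c : ℝ, d ≤ c ∧ ∀ j, A j ≤ c • (1 : H →L[ℂ] H) := by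
    obtain ⟨j0, hj0⟩ := Finite.exists_max fun j => ‖A j‖
    exact ⟨max d ‖A j0‖, le_max_left _ _, fun j => (le_norm_smul_one (hA j).nonneg).trans
      (smul_le_smul_of_nonneg_right ((hj0 j).trans (le_max_right _ _)) posInv_one.nonneg)⟩
  have hc : 0 < c := hd.trans_le hdc
  have hfc : f (c • 1) ≤ c • 1 := by
    conv_rhs => rw [← hM1 hc]
    refine hMmono _ _ (hσP (hcP hc)) (fun _ => hcP hc) fun j => ?_
    have := (hσ j).mono _ _ _ _ (hcP hc) (hcP hc) (hA j) (hcP hc) (loe_refl _) (hcA j)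
    rwa [hσ1 hc] at this
  have hfd : d • 1 ≤ f (d • 1) := by
    conv_lhs => rw [← hM1 hd]
    refine hMmono _ _ (fun _ => hcP hd) (hσP (hcP hd)) fun j => ?_
    have := (hσ j).mono _ _ _ _ (hcP hd) (hcP hd) (hcP hd) (hA j) (loe_refl _) (hdA j)
    rwa [hσ1 hd] at this
  let X : ℕ → H →L[ℂ] H := fun k => f^[k] (c • 1)
  have hXs k : X (k + 1) = f (X k) := Function.iterate_succ_apply' f k _
  have hXd k : d • 1 ≤ X k := by
    induction k with
    | zero => exact smul_le_smul_of_nonneg_right hdc posInv_one.nonneg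
    | succ k ih =>
      rw [hXs]
      exact hfd.trans (hfmono (hcP hd) ((hcP hd).of_le ih) ih)
  have hXP k : PosInv (X k) := (hcP hd).of_le (hXd k)
  have hXstep k : X (k + 1) ≤ X k := by
    induction k with
    | zero => exact hfc
    | succ k ih =>
      rw [hXs (k + 1)]
      conv_rhs => rw [hXs k]
      exact hfmono (hXP _) (hXP _) ih
  obtain ⟨X0, hX0⟩ := exists_sConv_of_antitone (antitone_nat_of_succ_le hXstep)
    fun k => (hXP k).nonneg
  have hX0P : PosInv X0 := (hcP hd).of_le (le_of_sConv hX0 hXd)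
  have hfX : SConv (fun k => f (X k)) (f X0) := by
    have hσX j := (hσ j).downCont X (fun _ => A j) X0 (A j) hXP (fun _ => hA j) hX0P (hA j)
      hXstep (fun _ => le_refl (A j)) hX0 (fun _ => tendsto_const_nhds)
    exact hMcont (fun k j => σ j (X k) (A j)) (fun j => σ j X0 (A j))
      (fun k => hσP (hXP k)) (hσP hX0P) (fun k j => (hσX j).1 k) fun j => (hσX j).2
  have hX0fix : X0 = f X0 := by
    refine sConv_unique (X := fun k => X (k + 1))
      (fun x => (hX0 x).comp (tendsto_add_atTop_nat 1)) ?_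
    simpa only [hXs] using hfX
  refine ⟨X0, ⟨hX0P, hX0fix⟩, fun Y ⟨hYP, hYfix⟩ => le_antisymm ?_ ?_⟩
  · exact deformed_fixedPoint_le hn hMmono hMhomog hσ hσstrict hA hX0P hYP hX0fix hYfix
  · exact deformed_fixedPoint_le hn hMmono hMhomog hσ hσstrict hA hYP hX0P hYfix hX0fix
end
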